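/- Let α be real and a, q positive integers with gcd(a,q) = 1 and |α − a/q| < 1/q². Then S₁(α) = Σ_{δX ≤ p ≤ X} (log p) e(pα) satisfies |S₁(α)| ≪ (X/√q + √(Xq) + X^{4/5}) (log X)⁴. -/

import Mathlib

/-!
Vaughan's identity writes the von Mangoldt function, up to its values at `n ≤ U = X^{2/5}`, as a
combination of convolutions of two kinds. In a type I convolution `f * w` the weight `w` is
monotone and `f` is supported on small `d`; by partial summation the sums over multiples of `d` are
then bounded by geometric sums `min (X / d) (1 / ‖dα‖)`. In a type II convolution both factors are
supported beyond `U`; after splitting one variable dyadically, the Cauchy–Schwarz inequality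
removes its coefficients and leaves geometric sums `min D (1 / ‖(k₁ - k₂)α‖)`. Both kinds of sums
are small on average because the points `nα` modulo one, for `n` in a block of `q` consecutive
integers, are spaced like the fractions with denominator `q`. Passing from prime powers to primes
costs `O(√X log X)`.
-/

open Real MeasureTheory

/-- `e(x) = exp(2πix)` -/
noncomputable def e (x : ℝ) : ℂ := Complex.exp (2 * Real.pi * Complex.I * x)

/-- `S₁(α) = Σ_{δX ≤ p ≤ X} (log p) e(pα)`, sum over primes `p`. -/
noncomputable def S1 (δ X : ℝ) (α : ℝ) : ℂ :=
  ∑ p ∈ (Finset.Icc 1 (Nat.floor X)).filter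
      (fun p : ℕ => p.Prime ∧ δ * X ≤ (p : ℝ) ∧ (p : ℝ) ≤ X),
    (Real.log p : ℂ) * e ((p : ℝ) * α)

open Finset
open scoped ArithmeticFunction.vonMangoldt ArithmeticFunction.Moebius ArithmeticFunction.zeta

/-! ### Geometric sums of additive characters -/

lemma e_eq_fourierChar (x : ℝ) : e x = Real.fourierChar x := by
  rw [Real.fourierChar_apply, e]
  congr 1
  push_cast
  ring

lemma norm_e (x : ℝ) : ‖e x‖ = 1 := by
  rw [e_eq_fourierChar, Circle.norm_coe]

lemma e_add (x y : ℝ) : e (x + y) = e x * e y := by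
  simp only [e_eq_fourierChar, AddChar.map_add_eq_mul, Circle.coe_mul]

lemma e_neg (x : ℝ) : e (-x) = starRingEnd ℂ (e x) := by
  simp only [e_eq_fourierChar, AddChar.map_neg_eq_inv, Circle.coe_inv_eq_conj]

lemma e_natCast_mul (n : ℕ) (x : ℝ) : e (n * x) = e x ^ n := by
  simp only [e_eq_fourierChar, ← nsmul_eq_mul, AddChar.map_nsmul_eq_pow, Circle.coe_pow]

lemma e_sub_intCast (x : ℝ) (n : ℤ) : e (x - n) = e x := by
  rw [e, e, ← Complex.exp_periodic.sub_int_mul_eq (x := 2 * π * Complex.I * x) n]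
  congr 1
  push_cast
  ring

/-- The distance from `x` to the nearest integer, written `‖x‖` in the literature. -/
noncomputable def distInt (x : ℝ) : ℝ := ‖(x : UnitAddCircle)‖

lemma distInt_eq_abs_sub_round (x : ℝ) : distInt x = |x - round x| := UnitAddCircle.norm_eq

lemma distInt_nonneg (x : ℝ) : 0 ≤ distInt x := norm_nonneg _

lemma distInt_neg (x : ℝ) : distInt (-x) = distInt x := by
  rw [distInt, distInt, AddCircle.coe_neg, norm_neg]

lemma distInt_eq_min_fract (x : ℝ) : distInt x = min (Int.fract x) (1 - Int.fract x) := by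
  rw [distInt_eq_abs_sub_round, abs_sub_round_eq_min]

lemma four_mul_distInt_le_norm_e_sub_one (x : ℝ) : 4 * distInt x ≤ ‖e x - 1‖ := by
  set t := x - round x with ht
  have ht_half : |t| ≤ 1 / 2 := abs_sub_round x
  have hexp : e x = Complex.exp (Complex.I * (2 * π * t : ℝ)) := by
    rw [← e_sub_intCast x (round x), ← ht, e]
    congr 1
    push_cast
    ring
  have hnorm : ‖e x - 1‖ = 2 * |sin (π * t)| := by
    rw [hexp, Complex.norm_exp_I_mul_ofReal_sub_one, mul_assoc, mul_div_cancel_left₀ _ two_ne_zero,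
      norm_mul, norm_two, norm_eq_abs]
  have hjordan := mul_abs_le_abs_sin (x := π * t) (by
    rw [abs_mul, abs_of_pos pi_pos]
    nlinarith [pi_pos])
  rw [abs_mul, abs_of_pos pi_pos, ← mul_assoc, div_mul_cancel₀ _ pi_ne_zero] at hjordan
  rw [hnorm, distInt_eq_abs_sub_round]
  linarith

/-- A stand-in for `min M t⁻¹`, equal to it up to a factor in `[1, 2]` for `0 < M` and `0 < t`.
Unlike the minimum it takes the correct value, of order `M`, at `t = 0`. -/
noncomputable def cappedInv (M t : ℝ) : ℝ := 2 * M / (1 + M * t)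

lemma cappedInv_nonneg {M t : ℝ} (hM : 0 ≤ M) (ht : 0 ≤ t) : 0 ≤ cappedInv M t := by
  unfold cappedInv
  positivity

lemma cappedInv_le_cappedInv {M M' t t' : ℝ} (hM : 0 ≤ M) (hMM' : M ≤ M') (ht' : 0 ≤ t')
    (ht : t' ≤ t) : cappedInv M t ≤ cappedInv M' t' := by
  have hM' : 0 ≤ M' := hM.trans hMM'
  calc cappedInv M t ≤ cappedInv M t' := by
        unfold cappedInv
        gcongr
    _ ≤ cappedInv M' t' := by
        unfold cappedInv
        rw [div_le_div_iff₀ (by positivity) (by positivity)]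
        nlinarith

lemma cappedInv_le_two_mul_cappedInv {M Q t : ℝ} (hM : 0 ≤ M) (hQ : 0 < Q) (ht : 1 / Q ≤ t) :
    cappedInv M t ≤ 2 * cappedInv Q t := by
  have ht_pos : 0 < t := lt_of_lt_of_le (by positivity) ht
  rw [div_le_iff₀ hQ] at ht
  unfold cappedInv
  rw [← mul_div_assoc, div_le_div_iff₀ (by positivity) (by positivity)]
  nlinarith [mul_nonneg hM ht_pos.le, mul_nonneg (mul_nonneg hM hQ.le) ht_pos.le]

lemma norm_sum_Ico_e_mul_distInt_le (β : ℝ) (A B : ℕ) :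
    ‖∑ n ∈ Ico A B, e (n * β)‖ * (2 * distInt β) ≤ 1 := by
  rcases le_total A B with hAB | hBA
  · have hgeom : (∑ n ∈ Ico A B, e (n * β)) * (e β - 1) = e (B * β) - e (A * β) := by
      simp only [e_natCast_mul, geom_sum_Ico_mul _ hAB]
    have hnorm : ‖∑ n ∈ Ico A B, e (n * β)‖ * ‖e β - 1‖ ≤ 2 := by
      rw [← norm_mul, hgeom]
      refine (norm_sub_le _ _).trans_eq ?_
      rw [norm_e, norm_e, one_add_one_eq_two]
    have := mul_le_mul_of_nonneg_left (four_mul_distInt_le_norm_e_sub_one β)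
      (norm_nonneg (∑ n ∈ Ico A B, e (n * β)))
    linarith
  · simp [Ico_eq_empty_of_le hBA]

lemma norm_sum_Ico_e_le_cappedInv {M : ℝ} (hM : 0 ≤ M) (β : ℝ) {A B : ℕ} (hAB : (B : ℝ) ≤ A + M) :
    ‖∑ n ∈ Ico A B, e (n * β)‖ ≤ cappedInv M (distInt β) := by
  have htrivial : ‖∑ n ∈ Ico A B, e (n * β)‖ ≤ M := by
    calc ‖∑ n ∈ Ico A B, e (n * β)‖ ≤ ∑ n ∈ Ico A B, ‖e (n * β)‖ := norm_sum_le _ _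
      _ = ((B - A : ℕ) : ℝ) := by simp [norm_e]
      _ ≤ M := by
        rcases le_total A B with h | h
        · rw [Nat.cast_sub h]
          linarith
        · simpa [Nat.sub_eq_zero_of_le h] using hM
  have hgeom := norm_sum_Ico_e_mul_distInt_le β A B
  have hdist := distInt_nonneg β
  rw [cappedInv, le_div_iff₀ (by positivity)]
  nlinarith

/-! ### Spacing of the multiples of `α` modulo one -/

/-- `a / q` is a reduced fraction approximating `α` as well as Dirichlet's theorem provides. -/
structure IsDirichletApprox (α : ℝ) (a : ℤ) (q : ℕ) : Prop where
  pos : 0 < q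
  coprime : IsCoprime a q
  abs_sub_div_le : |α - a / q| ≤ 1 / (q : ℝ) ^ 2

namespace IsDirichletApprox

variable {α : ℝ} {a : ℤ} {q : ℕ}

lemma injOn_intCast_mul (h : IsDirichletApprox α a q) :
    Set.InjOn (fun j : ℕ ↦ (a : ZMod q) * j) (range q) := by
  intro i hi j hj hij
  have hunit : IsUnit (a : ZMod q) := (ZMod.coe_int_isUnit_iff_isCoprime a q).2 h.coprime.symm
  have hmod := (ZMod.natCast_eq_natCast_iff' i j q).1 (hunit.mul_left_cancel hij)
  rwa [Nat.mod_eq_of_lt (mem_range.1 hi), Nat.mod_eq_of_lt (mem_range.1 hj)] at hmod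

lemma abs_mul_sub_mul_lt_two (h : IsDirichletApprox α a q) {n m : ℤ} (hn : |n| ≤ q)
    (hm : |q * (α * n - m)| < 1) : |a * n - m * q| < 2 := by
  have hq : (0 : ℝ) < q := mod_cast h.pos
  have hn' : |(n : ℝ)| ≤ q := mod_cast hn
  have herr : |q * ((a / q - α) * n)| ≤ 1 := by
    rw [abs_mul, abs_mul, abs_of_pos hq, abs_sub_comm]
    calc q * (|α - a / q| * |(n : ℝ)|) ≤ q * (1 / (q : ℝ) ^ 2 * q) := by
          gcongr
          exact h.abs_sub_div_le
      _ = 1 := by field_simp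
  have hsplit : (a * n - m * q : ℝ) = q * ((a / q - α) * n) + q * (α * n - m) := by
    field_simp
    ring
  have hlt : |(a * n - m * q : ℝ)| < 2 := by
    rw [hsplit]
    exact (abs_add_le _ _).trans_lt (by linarith)
  exact_mod_cast hlt

lemma card_filter_floor_mul_fract_eq_le (h : IsDirichletApprox α a q) (n₀ : ℤ) (k : ℕ) :
    #((range q).filter fun j : ℕ ↦ ⌊q * Int.fract (α * (n₀ + j))⌋₊ = k) ≤ 3 := by
  set F := (range q).filter fun j : ℕ ↦ ⌊q * Int.fract (α * (n₀ + j))⌋₊ = k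
  rcases F.eq_empty_or_nonempty with hF | ⟨i, hi⟩
  · simp [hF]
  have hfloor (y : ℝ) : (⌊q * Int.fract y⌋₊ : ℤ) = ⌊q * Int.fract y⌋ :=
    Int.natCast_floor_eq_floor (by positivity)
  have hmaps : ∀ j ∈ F, (a : ZMod q) * j ∈
      ({(a : ZMod q) * i - 1, (a : ZMod q) * i, (a : ZMod q) * i + 1} : Finset (ZMod q)) := by
    intro j hj
    obtain ⟨hiq, hik⟩ := mem_filter.1 hi
    obtain ⟨hjq, hjk⟩ := mem_filter.1 hj
    set m : ℤ := ⌊α * (n₀ + j)⌋ - ⌊α * (n₀ + i)⌋ with hm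
    have hclose : |q * (α * ((j - i : ℤ) : ℝ) - m)| < 1 := by
      have := Int.abs_sub_lt_one_of_floor_eq_floor
        (a := q * Int.fract (α * (n₀ + j))) (b := q * Int.fract (α * (n₀ + i)))
        (by rw [← hfloor, ← hfloor, hik, hjk])
      have hdiff : q * (α * ((j - i : ℤ) : ℝ) - m) =
          q * Int.fract (α * (n₀ + j)) - q * Int.fract (α * (n₀ + i)) := by
        simp only [hm, Int.fract]
        push_cast
        ring
      rwa [hdiff]
    rw [mem_range] at hiq hjq
    have hlt := h.abs_mul_sub_mul_lt_two (abs_le.2 ⟨by omega, by omega⟩) hclose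
    set r := a * (j - i) - m * q with hr
    have hcast : (a : ZMod q) * j = a * i + r := by
      simp [hr, mul_sub]
    have hr_cases : r = -1 ∨ r = 0 ∨ r = 1 := by
      rw [abs_lt] at hlt
      omega
    rcases hr_cases with hr | hr | hr <;> simp [hcast, hr, sub_eq_add_neg]
  exact (card_le_card_of_injOn _ hmaps (h.injOn_intCast_mul.mono
    (coe_subset.2 (filter_subset _ _)))).trans card_le_three

end IsDirichletApprox

lemma floor_mul_fract_lt {q : ℕ} (hq : 0 < q) (y : ℝ) : ⌊q * Int.fract y⌋₊ < q := by
  have hq' : (0 : ℝ) < q := mod_cast hq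
  rw [Nat.floor_lt (by positivity)]
  exact mul_lt_of_lt_one_right hq' (Int.fract_lt_one y)

-- The two terms account for `y` lying to the right, respectively left, of its nearest integer.
lemma cappedInv_distInt_le_add {M : ℝ} (hM : 0 ≤ M) {q : ℕ} (hq : 0 < q) (y : ℝ) :
    cappedInv M (distInt y) ≤ cappedInv M ((⌊q * Int.fract y⌋₊ : ℕ) / q) +
      cappedInv M ((q - 1 - ⌊q * Int.fract y⌋₊ : ℕ) / q) := by
  have hq' : (0 : ℝ) < q := mod_cast hq
  have hkq := floor_mul_fract_lt hq y
  have hk_le : (⌊q * Int.fract y⌋₊ : ℝ) ≤ q * Int.fract y := Nat.floor_le (by positivity)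
  have hlt_k := Nat.lt_floor_add_one (q * Int.fract y)
  set k := ⌊q * Int.fract y⌋₊
  have hk_nonneg : 0 ≤ cappedInv M ((k : ℕ) / q) := cappedInv_nonneg hM (by positivity)
  have hk'_nonneg : 0 ≤ cappedInv M ((q - 1 - k : ℕ) / q) := cappedInv_nonneg hM (by positivity)
  have hdist := distInt_eq_min_fract y
  rcases min_choice (Int.fract y) (1 - Int.fract y) with h | h <;> rw [h] at hdist
  · have : cappedInv M (distInt y) ≤ cappedInv M (k / q) := by
      refine cappedInv_le_cappedInv hM le_rfl (by positivity) ?_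
      rwa [hdist, div_le_iff₀' hq']
    linarith
  · have : cappedInv M (distInt y) ≤ cappedInv M ((q - 1 - k : ℕ) / q) := by
      refine cappedInv_le_cappedInv hM le_rfl (by positivity) ?_
      rw [hdist, div_le_iff₀' hq', Nat.cast_sub (by omega), Nat.cast_sub (by omega)]
      push_cast
      linarith
    linarith

lemma log_natCast_le_log_natCast {m n : ℕ} (hmn : m ≤ n) : log m ≤ log n := by
  rw [← log_of_nat_eq_posLog, ← log_of_nat_eq_posLog]
  exact posLog_le_posLog m.cast_nonneg (mod_cast hmn)

lemma sum_range_cappedInv_div_le {M : ℝ} (hM : 0 ≤ M) {q : ℕ} (hq : 0 < q) :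
    ∑ k ∈ range q, cappedInv M (k / q) ≤ 2 * (M + q * (1 + log q)) := by
  obtain ⟨p, rfl⟩ := Nat.exists_eq_add_one.2 hq
  have hterm (k : ℕ) : cappedInv M ((k + 1 : ℕ) / (p + 1 : ℕ)) ≤
      2 * (p + 1 : ℕ) * ((k + 1 : ℕ) : ℝ)⁻¹ := by
    rw [cappedInv, div_le_iff₀ (by positivity)]
    push_cast
    field_simp
    nlinarith
  have hharmonic : (harmonic p : ℝ) ≤ 1 + log (p + 1 : ℕ) := by
    refine (harmonic_le_one_add_log p).trans ?_
    gcongr 1 + ?_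
    exact log_natCast_le_log_natCast p.le_succ
  calc ∑ k ∈ range (p + 1), cappedInv M (k / (p + 1 : ℕ))
      = ∑ k ∈ range p, cappedInv M ((k + 1 : ℕ) / (p + 1 : ℕ)) + 2 * M := by
        rw [sum_range_succ']
        simp [cappedInv]
    _ ≤ ∑ k ∈ range p, 2 * (p + 1 : ℕ) * ((k + 1 : ℕ) : ℝ)⁻¹ + 2 * M := by
        gcongr with k
        exact hterm k
    _ = 2 * (p + 1 : ℕ) * (harmonic p : ℝ) + 2 * M := by
        rw [← mul_sum, harmonic]
        push_cast
        rfl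
    _ ≤ 2 * (p + 1 : ℕ) * (1 + log (p + 1 : ℕ)) + 2 * M := by gcongr
    _ = 2 * (M + (p + 1 : ℕ) * (1 + log (p + 1 : ℕ))) := by ring

namespace IsDirichletApprox

variable {α : ℝ} {a : ℤ} {q : ℕ}

lemma sum_block_cappedInv_le (h : IsDirichletApprox α a q) (n₀ : ℤ) {M : ℝ} (hM : 0 ≤ M) :
    ∑ j ∈ range q, cappedInv M (distInt (α * (n₀ + j))) ≤ 12 * (M + q * (1 + log q)) := by
  set key : ℕ → ℕ := fun j ↦ ⌊q * Int.fract (α * (n₀ + j))⌋₊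
  set H : ℕ → ℝ := fun k ↦ cappedInv M (k / q)
  have hH_nonneg (k : ℕ) : 0 ≤ H k := cappedInv_nonneg hM (by positivity)
  have hmaps : ∀ j ∈ range q, key j ∈ range q :=
    fun j _ ↦ mem_range.2 (floor_mul_fract_lt h.pos _)
  have hfiber (k : ℕ) : ∑ j ∈ range q with key j = k, (H (key j) + H (q - 1 - key j)) ≤
      3 * (H k + H (q - 1 - k)) := by
    rw [sum_congr rfl fun j hj ↦ by rw [(mem_filter.1 hj).2], sum_const, nsmul_eq_mul]
    have := h.card_filter_floor_mul_fract_eq_le n₀ k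
    gcongr
    · exact add_nonneg (hH_nonneg _) (hH_nonneg _)
    · exact Nat.cast_le_ofNat.2 this
  calc ∑ j ∈ range q, cappedInv M (distInt (α * (n₀ + j)))
      ≤ ∑ j ∈ range q, (H (key j) + H (q - 1 - key j)) :=
        sum_le_sum fun j _ ↦ cappedInv_distInt_le_add hM h.pos _
    _ = ∑ k ∈ range q, ∑ j ∈ range q with key j = k, (H (key j) + H (q - 1 - key j)) :=
        (sum_fiberwise_of_maps_to hmaps _).symm
    _ ≤ ∑ k ∈ range q, 3 * (H k + H (q - 1 - k)) := sum_le_sum fun k _ ↦ hfiber k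
    _ = 6 * ∑ k ∈ range q, H k := by
        rw [← mul_sum, sum_add_distrib, sum_range_reflect H]
        ring
    _ ≤ 6 * (2 * (M + q * (1 + log q))) := by
        gcongr
        exact sum_range_cappedInv_div_le hM h.pos
    _ = 12 * (M + q * (1 + log q)) := by ring

lemma sum_range_cappedInv_le (h : IsDirichletApprox α a q) (n₀ : ℤ) {M : ℝ} (hM : 0 ≤ M)
    (K : ℕ) : ∑ j ∈ range K, cappedInv M (distInt (α * (n₀ + j))) ≤
      (K / q + 1) * (12 * (M + q * (1 + log q))) := by
  have hblocks (R : ℕ) : ∑ j ∈ range (q * R), cappedInv M (distInt (α * (n₀ + j))) ≤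
      R * (12 * (M + q * (1 + log q))) := by
    induction R with
    | zero => simp
    | succ R ih =>
      have hlast := h.sum_block_cappedInv_le (n₀ + (q * R : ℕ)) hM
      rw [Nat.mul_succ, sum_range_add]
      push_cast [add_assoc] at hlast ⊢
      linarith
  calc ∑ j ∈ range K, cappedInv M (distInt (α * (n₀ + j)))
      ≤ ∑ j ∈ range (q * (K / q + 1)), cappedInv M (distInt (α * (n₀ + j))) :=
        sum_le_sum_of_subset_of_nonneg
          (range_subset_range.2 (Nat.lt_mul_div_succ K h.pos).le)
          fun _ _ _ ↦ cappedInv_nonneg hM (distInt_nonneg _)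
    _ ≤ (K / q + 1 : ℕ) * (12 * (M + q * (1 + log q))) := hblocks _
    _ ≤ (K / q + 1) * (12 * (M + q * (1 + log q))) := by
        gcongr
        push_cast
        gcongr
        exact Nat.cast_div_le

lemma inv_two_mul_le_distInt (h : IsDirichletApprox α a q) {n : ℕ} (hn : 0 < n)
    (hnq : 2 * n ≤ q) : 1 / (2 * q : ℝ) ≤ distInt (α * n) := by
  have hq : (0 : ℝ) < q := mod_cast h.pos
  have hnq' : (2 * n : ℝ) ≤ q := mod_cast hnq
  set m := round (α * n)
  have hne : a * n - m * q ≠ 0 := by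
    intro hzero
    have hdvd : (q : ℤ) ∣ n :=
      h.coprime.symm.dvd_of_dvd_mul_left ⟨m, by linarith⟩
    have := Int.le_of_dvd (mod_cast hn) hdvd
    omega
  have hone : (1 : ℝ) ≤ |(a : ℝ) * n - m * q| := mod_cast Int.one_le_abs hne
  have hsplit : (a : ℝ) * n - m * q = q * (α * n - m) - q * n * (α - a / q) := by
    field_simp
    ring
  have herr : q * n * |α - a / q| ≤ 1 / 2 := by
    calc q * n * |α - a / q| ≤ q * n * (1 / (q : ℝ) ^ 2) := by
          gcongr
          exact h.abs_sub_div_le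
      _ = n / q := by field_simp
      _ ≤ 1 / 2 := by
          rw [div_le_div_iff₀ hq two_pos]
          linarith
  have htriangle : |(a : ℝ) * n - m * q| ≤ q * distInt (α * n) + q * n * |α - a / q| := by
    rw [hsplit, distInt_eq_abs_sub_round]
    refine (abs_sub _ _).trans_eq ?_
    rw [abs_mul, abs_mul, abs_of_pos hq, abs_of_nonneg (by positivity : (0 : ℝ) ≤ q * n)]
  rw [div_le_iff₀ (by positivity)]
  linarith

lemma cappedInv_div_le_add (h : IsDirichletApprox α a q) {X : ℝ} (hX : 0 ≤ X) (n : ℕ) :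
    cappedInv (X / n) (distInt (α * n)) ≤
      2 * cappedInv (2 * q) (distInt (α * n)) + cappedInv (2 * (X / q)) (distInt (α * n)) := by
  have hq : (0 : ℝ) < q := mod_cast h.pos
  have hdist := distInt_nonneg (α * n)
  have hfst : 0 ≤ cappedInv (2 * q) (distInt (α * n)) := cappedInv_nonneg (by positivity) hdist
  have hsnd : 0 ≤ cappedInv (2 * (X / q)) (distInt (α * n)) :=
    cappedInv_nonneg (by positivity) hdist
  rcases n.eq_zero_or_pos with rfl | hn
  · rw [show cappedInv (X / (0 : ℕ)) (distInt (α * (0 : ℕ))) = 0 by simp [cappedInv]]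
    positivity
  rcases le_or_gt (2 * n) q with hnq | hnq
  · have := cappedInv_le_two_mul_cappedInv (M := X / n) (by positivity) (by positivity)
      (h.inv_two_mul_le_distInt hn hnq)
    linarith
  · have hle : X / n ≤ 2 * (X / q) := by
      have hnq' : (q : ℝ) ≤ 2 * n := mod_cast hnq.le
      rw [← mul_div_assoc, div_le_div_iff₀ (mod_cast hn) hq]
      nlinarith
    have := cappedInv_le_cappedInv (by positivity) hle hdist le_rfl
    linarith

lemma sum_range_cappedInv_div_le (h : IsDirichletApprox α a q) {X : ℝ} (hX : 0 ≤ X) :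
    ∑ n ∈ range q, cappedInv (X / n) (distInt (α * n)) ≤
      24 * (X / q) + 84 * (q * (1 + log q)) := by
  have hlog := log_natCast_nonneg q
  have hfst := h.sum_block_cappedInv_le 0 (M := 2 * q) (by positivity)
  have hsnd := h.sum_block_cappedInv_le 0 (M := 2 * (X / q)) (by positivity)
  simp only [Int.cast_zero, zero_add] at hfst hsnd
  calc ∑ n ∈ range q, cappedInv (X / n) (distInt (α * n))
      ≤ 2 * ∑ n ∈ range q, cappedInv (2 * q) (distInt (α * n)) +
          ∑ n ∈ range q, cappedInv (2 * (X / q)) (distInt (α * n)) := by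
        rw [mul_sum, ← sum_add_distrib]
        exact sum_le_sum fun n _ ↦ h.cappedInv_div_le_add hX n
    _ ≤ 24 * (X / q) + 84 * (q * (1 + log q)) := by nlinarith

lemma sum_block_cappedInv_div_le (h : IsDirichletApprox α a q) {X : ℝ} (hX : 0 ≤ X) (r : ℕ) :
    ∑ j ∈ range q, cappedInv (X / (q * (r + 1) + j : ℕ)) (distInt (α * (q * (r + 1) + j : ℕ))) ≤
      12 * (X / q * ((r : ℝ) + 1)⁻¹ + q * (1 + log q)) := by
  have hq : (0 : ℝ) < q := mod_cast h.pos
  have hblock := h.sum_block_cappedInv_le ((q * (r + 1) : ℕ) : ℤ)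
    (M := X / q * ((r : ℝ) + 1)⁻¹) (by positivity)
  refine (sum_le_sum fun j _ ↦ ?_).trans hblock
  have hcast : ((q * (r + 1) + j : ℕ) : ℝ) = (((q * (r + 1) : ℕ) : ℤ) : ℝ) + j := by
    push_cast
    ring
  rw [hcast]
  refine cappedInv_le_cappedInv (by positivity) ?_ (distInt_nonneg _) le_rfl
  rw [← div_eq_mul_inv, div_div]
  push_cast
  gcongr
  linarith [j.cast_nonneg (α := ℝ)]

lemma sum_range_mul_cappedInv_div_le (h : IsDirichletApprox α a q) {X : ℝ} (hX : 0 ≤ X)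
    (R : ℕ) : ∑ n ∈ range (q * (R + 1)), cappedInv (X / n) (distInt (α * n)) ≤
      24 * (X / q) + 84 * (q * (1 + log q)) + 12 * (X / q) * harmonic R +
        12 * (R * (q * (1 + log q))) := by
  induction R with
  | zero => simpa using h.sum_range_cappedInv_div_le hX
  | succ R ih =>
    have hlast := h.sum_block_cappedInv_div_le hX R
    rw [Nat.mul_succ, sum_range_add, harmonic_succ]
    push_cast at ih hlast ⊢
    linarith

lemma sum_Ioc_cappedInv_div_le (h : IsDirichletApprox α a q) {X : ℝ} (hX : 0 ≤ X) (D : ℕ) :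
    ∑ n ∈ Ioc 0 D, cappedInv (X / n) (distInt (α * n)) ≤
      84 * (X / q + D + q) * (1 + log (q * D)) := by
  rcases D.eq_zero_or_pos with rfl | hD
  · simpa using by positivity
  have hq : (0 : ℝ) < q := mod_cast h.pos
  have hlogq := log_natCast_nonneg q
  have hlogD := log_natCast_nonneg D
  have hsubset : Ioc 0 D ⊆ range (q * (D / q + 1)) := fun n hn ↦
    mem_range.2 ((mem_Ioc.1 hn).2.trans_lt (Nat.lt_mul_div_succ D h.pos))
  refine (sum_le_sum_of_subset_of_nonneg hsubset fun n _ _ ↦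
    cappedInv_nonneg (by positivity) (distInt_nonneg _)).trans
    ((h.sum_range_mul_cappedInv_div_le hX (D / q)).trans ?_)
  have hharmonic : (harmonic (D / q) : ℝ) ≤ 1 + log D :=
    (harmonic_le_one_add_log _).trans (by
      gcongr 1 + ?_
      exact log_natCast_le_log_natCast (Nat.div_le_self D q))
  have hdiv : ((D / q : ℕ) : ℝ) * q ≤ D := mod_cast Nat.div_mul_le_self D q
  rw [log_mul hq.ne' (by positivity)]
  have hXq : X / q * (harmonic (D / q) : ℝ) ≤ X / q * (1 + log D) := by gcongr
  have hDq : ((D / q : ℕ) : ℝ) * q * (1 + log q) ≤ D * (1 + log q) := by gcongr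
  have hXq_nonneg : 0 ≤ X / q := by positivity
  nlinarith [mul_nonneg hXq_nonneg hlogq, mul_nonneg hXq_nonneg hlogD,
    mul_nonneg hq.le hlogD, mul_nonneg D.cast_nonneg hlogD, mul_nonneg D.cast_nonneg hlogq]

end IsDirichletApprox

/-! ### Exponential sums with arithmetic coefficients -/

/-- The exponential sum `∑_{n ≤ N} f(n) e(nα)`. -/
noncomputable def expSum (f : ArithmeticFunction ℝ) (N : ℕ) (α : ℝ) : ℂ :=
  ∑ n ∈ Ioc 0 N, (f n : ℂ) * e (n * α)

lemma expSum_add (f g : ArithmeticFunction ℝ) (N : ℕ) (α : ℝ) :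
    expSum (f + g) N α = expSum f N α + expSum g N α := by
  simp only [expSum, ArithmeticFunction.add_apply, Complex.ofReal_add, add_mul, sum_add_distrib]

lemma expSum_sub (f g : ArithmeticFunction ℝ) (N : ℕ) (α : ℝ) :
    expSum (f - g) N α = expSum f N α - expSum g N α := by
  have hsub (n : ℕ) : (f - g) n = f n - g n := rfl
  simp only [expSum, hsub, Complex.ofReal_sub, sub_mul, sum_sub_distrib]

lemma norm_expSum_le_sum_abs (f : ArithmeticFunction ℝ) (N : ℕ) (α : ℝ) :
    ‖expSum f N α‖ ≤ ∑ n ∈ Ioc 0 N, |f n| := by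
  refine (norm_sum_le _ _).trans_eq (sum_congr rfl fun n _ ↦ ?_)
  rw [norm_mul, norm_e, mul_one, Complex.norm_real, norm_eq_abs]

lemma expSum_mul (f g : ArithmeticFunction ℝ) (N : ℕ) (α : ℝ) :
    expSum (f * g) N α = ∑ d ∈ Ioc 0 N, (f d : ℂ) * expSum g (N / d) (d * α) := by
  have hterm : ∀ n ∈ Ioc 0 N, ((f * g) n : ℂ) * e (n * α) =
      ∑ d ∈ Ioc 0 N, ∑ k ∈ Ioc 0 N,
        if d * k = n then (f d : ℂ) * (g k * e (k * (d * α))) else 0 := by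
    intro n hn
    obtain ⟨hn_pos, hnN⟩ := mem_Ioc.1 hn
    rw [← sum_product', ← sum_filter, ArithmeticFunction.mul_apply,
      Nat.divisorsAntidiagonal_eq_prod_filter_of_le hn_pos.ne' hnN, Complex.ofReal_sum, sum_mul]
    refine sum_congr rfl fun x hx ↦ ?_
    rw [← (mem_filter.1 hx).2]
    push_cast
    ring_nf
  rw [expSum, sum_congr rfl hterm, sum_comm]
  refine sum_congr rfl fun d hd ↦ ?_
  have hd_pos := (mem_Ioc.1 hd).1
  rw [sum_comm, expSum, mul_sum]
  simp only [sum_ite_eq]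
  rw [← sum_filter]
  refine sum_congr ?_ fun _ _ ↦ rfl
  ext k
  simp only [mem_filter, mem_Ioc, Nat.le_div_iff_mul_le hd_pos, mul_comm k d]
  exact ⟨fun h ↦ ⟨h.1.1, h.2.2⟩, fun h ↦ ⟨⟨h.1, (Nat.le_mul_of_pos_left k hd_pos).trans h.2⟩,
    Nat.mul_pos hd_pos h.1, h.2⟩⟩

/-! ### Type I sums -/

lemma norm_sum_mul_le_of_monotone {w : ℕ → ℝ} (hw : Monotone w) (hw₀ : w 0 = 0) {z : ℕ → ℂ}
    {K : ℕ} {B : ℝ} (hB : ∀ i, ‖∑ k ∈ Ioc i K, z k‖ ≤ B) :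
    ‖∑ k ∈ Ioc 0 K, (w k : ℂ) * z k‖ ≤ w K * B := by
  have htelescope (k : ℕ) : (w k : ℂ) = ∑ i ∈ range k, ((w (i + 1) - w i : ℝ) : ℂ) := by
    rw [← Complex.ofReal_sum, sum_range_sub, hw₀, sub_zero]
  have hswap : ∑ k ∈ Ioc 0 K, (w k : ℂ) * z k =
      ∑ i ∈ range K, ((w (i + 1) - w i : ℝ) : ℂ) * ∑ k ∈ Ioc i K, z k := by
    simp_rw [htelescope, sum_mul, mul_sum]
    refine sum_comm' fun k i ↦ ?_
    simp only [mem_Ioc, mem_range]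
    omega
  calc ‖∑ k ∈ Ioc 0 K, (w k : ℂ) * z k‖
      ≤ ∑ i ∈ range K, ‖((w (i + 1) - w i : ℝ) : ℂ) * ∑ k ∈ Ioc i K, z k‖ := by
        rw [hswap]
        exact norm_sum_le _ _
    _ ≤ ∑ i ∈ range K, (w (i + 1) - w i) * B := by
        refine sum_le_sum fun i _ ↦ ?_
        have hincr : 0 ≤ w (i + 1) - w i := sub_nonneg.2 (hw i.le_succ)
        rw [norm_mul, Complex.norm_of_nonneg hincr]
        exact mul_le_mul_of_nonneg_left (hB i) hincr
    _ = w K * B := by rw [← sum_mul, sum_range_sub, hw₀, sub_zero]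

lemma norm_expSum_le_of_monotone {w : ArithmeticFunction ℝ} (hw : Monotone ⇑w) {K : ℕ} {M : ℝ}
    (hKM : K ≤ M) (β : ℝ) : ‖expSum w K β‖ ≤ w K * cappedInv M (distInt β) := by
  refine norm_sum_mul_le_of_monotone hw w.map_zero fun i ↦ ?_
  have hIoc : Ioc i K = Ico (i + 1) (K + 1) := by
    ext
    simp only [mem_Ioc, mem_Ico]
    omega
  rw [hIoc]
  refine norm_sum_Ico_e_le_cappedInv (K.cast_nonneg.trans hKM) β ?_
  push_cast
  linarith [i.cast_nonneg (α := ℝ)]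

lemma IsDirichletApprox.norm_expSum_mul_le_of_monotone {α : ℝ} {a : ℤ} {q : ℕ}
    (h : IsDirichletApprox α a q) {f w : ArithmeticFunction ℝ} {D : ℕ} {c : ℝ} (hc : 0 ≤ c)
    (hf : ∀ d, |f d| ≤ c) (hfD : ∀ d, D < d → f d = 0) (hw : Monotone ⇑w) (N : ℕ) :
    ‖expSum (f * w) N α‖ ≤ c * w N * (84 * (N / q + D + q) * (1 + log (q * D))) := by
  have hw_nonneg (n : ℕ) : 0 ≤ w n := w.map_zero.symm.trans_le (hw n.zero_le)
  have hcapped (d : ℕ) : 0 ≤ cappedInv (N / d : ℝ) (distInt (α * d)) :=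
    cappedInv_nonneg (by positivity) (distInt_nonneg _)
  have hinner (d : ℕ) : ‖(f d : ℂ) * expSum w (N / d) (d * α)‖ ≤
      c * w N * cappedInv (N / d) (distInt (α * d)) := by
    rw [norm_mul, Complex.norm_real, norm_eq_abs, mul_assoc, mul_comm (d : ℝ) α]
    refine mul_le_mul (hf d) ?_ (norm_nonneg _) hc
    refine (norm_expSum_le_of_monotone hw Nat.cast_div_le _).trans ?_
    exact mul_le_mul_of_nonneg_right (hw (Nat.div_le_self N d)) (hcapped d)
  have hsupport : ∑ d ∈ Ioc 0 N with d ≤ D, (f d : ℂ) * expSum w (N / d) (d * α) =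
      ∑ d ∈ Ioc 0 N, (f d : ℂ) * expSum w (N / d) (d * α) :=
    sum_filter_of_ne fun d _ hne ↦ not_lt.1 fun hlt ↦ hne (by simp [hfD d hlt])
  calc ‖expSum (f * w) N α‖
      = ‖∑ d ∈ Ioc 0 N with d ≤ D, (f d : ℂ) * expSum w (N / d) (d * α)‖ := by
        rw [expSum_mul, hsupport]
    _ ≤ ∑ d ∈ Ioc 0 N with d ≤ D, c * w N * cappedInv (N / d) (distInt (α * d)) :=
        (norm_sum_le _ _).trans (sum_le_sum fun d _ ↦ hinner d)
    _ ≤ ∑ d ∈ Ioc 0 D, c * w N * cappedInv (N / d) (distInt (α * d)) := by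
        refine sum_le_sum_of_subset_of_nonneg (fun d ↦ ?_)
          fun d _ _ ↦ mul_nonneg (mul_nonneg hc (hw_nonneg N)) (hcapped d)
        simp only [mem_filter, mem_Ioc]
        tauto
    _ ≤ c * w N * (84 * (N / q + D + q) * (1 + log (q * D))) := by
        rw [← mul_sum]
        exact mul_le_mul_of_nonneg_left (h.sum_Ioc_cappedInv_div_le N.cast_nonneg D)
          (mul_nonneg hc (hw_nonneg N))

/-! ### Type II sums -/

lemma norm_sq_sum_mul_le_card_mul_sum {ι : Type*} {s : Finset ι} {f : ι → ℝ}
    (hf : ∀ i ∈ s, |f i| ≤ 1) (z : ι → ℂ) :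
    ‖∑ i ∈ s, (f i : ℂ) * z i‖ ^ 2 ≤ #s * ∑ i ∈ s, ‖z i‖ ^ 2 := by
  have hnorm : ‖∑ i ∈ s, (f i : ℂ) * z i‖ ≤ ∑ i ∈ s, ‖z i‖ := by
    refine (norm_sum_le _ _).trans (sum_le_sum fun i hi ↦ ?_)
    rw [norm_mul, Complex.norm_real, norm_eq_abs]
    exact mul_le_of_le_one_left (norm_nonneg _) (hf i hi)
  exact (pow_le_pow_left₀ (norm_nonneg _) hnorm 2).trans sq_sum_le_card_mul_sum_sq

lemma norm_sq_expSum (g : ArithmeticFunction ℝ) (K : ℕ) (β : ℝ) :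
    ((‖expSum g K β‖ ^ 2 : ℝ) : ℂ) =
      ∑ k ∈ Ioc 0 K ×ˢ Ioc 0 K, (g k.1 * g k.2 : ℂ) * e ((k.1 - k.2) * β) := by
  rw [← Complex.normSq_eq_norm_sq, ← Complex.mul_conj, expSum, map_sum, sum_mul_sum, sum_product]
  refine sum_congr rfl fun k₁ _ ↦ sum_congr rfl fun k₂ _ ↦ ?_
  rw [map_mul, Complex.conj_ofReal, ← e_neg, sub_mul, sub_eq_add_neg, e_add]
  ring

lemma sum_norm_sq_expSum_eq (g : ArithmeticFunction ℝ) (N : ℕ) {D : ℕ} (hD : 0 < D) (α : ℝ) :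
    ((∑ d ∈ Ico D (2 * D), ‖expSum g (N / d) (d * α)‖ ^ 2 : ℝ) : ℂ) =
      ∑ k ∈ Ioc 0 (N / D) ×ˢ Ioc 0 (N / D), (g k.1 * g k.2 : ℂ) *
        ∑ d ∈ Ico D (min (2 * D) (min (N / k.1 + 1) (N / k.2 + 1))),
          e (d * ((k.1 - k.2) * α)) := by
  have hmem {d : ℕ} (hDd : D ≤ d) (k : ℕ) :
      k ∈ Ioc 0 (N / d) ↔ k ∈ Ioc 0 (N / D) ∧ d ≤ N / k := by
    rcases k.eq_zero_or_pos with rfl | hk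
    · simp
    have hdiv : N / d ≤ N / D := Nat.div_le_div_left hDd hD
    rw [mem_Ioc, mem_Ioc, Nat.le_div_iff_mul_le hk, mul_comm d,
      ← Nat.le_div_iff_mul_le (hD.trans_le hDd)]
    exact ⟨fun h ↦ ⟨⟨hk, h.2.trans hdiv⟩, h.2⟩, fun h ↦ ⟨hk, h.2⟩⟩
  simp_rw [Complex.ofReal_sum, norm_sq_expSum, mul_sum]
  rw [sum_comm' (t' := Ioc 0 (N / D) ×ˢ Ioc 0 (N / D))
    (s' := fun k ↦ Ico D (min (2 * D) (min (N / k.1 + 1) (N / k.2 + 1))))]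
  · refine sum_congr rfl fun k _ ↦ sum_congr rfl fun d _ ↦ ?_
    rw [mul_left_comm]
  · rintro d ⟨k₁, k₂⟩
    simp only [mem_product, mem_Ico, lt_min_iff, Nat.lt_succ_iff]
    by_cases hDd : D ≤ d
    · rw [hmem hDd, hmem hDd]
      tauto
    · tauto

lemma sum_norm_sq_expSum_le (g : ArithmeticFunction ℝ) {N D : ℕ} (hD : 0 < D) {W : ℝ}
    (hg : ∀ k ≤ N, |g k| ≤ W) (α : ℝ) :
    ∑ d ∈ Ico D (2 * D), ‖expSum g (N / d) (d * α)‖ ^ 2 ≤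
      W ^ 2 * ∑ k ∈ Ioc 0 (N / D) ×ˢ Ioc 0 (N / D), cappedInv D (distInt ((k.1 - k.2) * α)) := by
  have hg' {k : ℕ} (hk : k ∈ Ioc 0 (N / D)) : |g k| ≤ W :=
    hg k ((mem_Ioc.1 hk).2.trans (Nat.div_le_self N D))
  rw [← Complex.norm_of_nonneg (sum_nonneg fun d (_ : d ∈ Ico D (2 * D)) ↦
    sq_nonneg ‖expSum g (N / d) (d * α)‖), sum_norm_sq_expSum_eq g N hD α, mul_sum]
  refine (norm_sum_le _ _).trans (sum_le_sum fun k hk ↦ ?_)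
  obtain ⟨hk₁, hk₂⟩ := mem_product.1 hk
  have hW : 0 ≤ W := (abs_nonneg _).trans (hg' hk₁)
  rw [norm_mul, norm_mul, Complex.norm_real, Complex.norm_real, norm_eq_abs, norm_eq_abs, sq]
  refine mul_le_mul (mul_le_mul (hg' hk₁) (hg' hk₂) (abs_nonneg _) hW)
    (norm_sum_Ico_e_le_cappedInv D.cast_nonneg _ ?_) (norm_nonneg _) (by positivity)
  rw [← two_mul]
  exact_mod_cast min_le_left _ _

lemma norm_sum_Ioc_le_of_dyadic {z : ℕ → ℂ} {N : ℕ} (hz : ∀ n, N < n → z n = 0) {B : ℝ}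
    (hB : ∀ D, 0 < D → ‖∑ n ∈ Ico D (2 * D), z n‖ ≤ B) :
    ‖∑ n ∈ Ioc 0 N, z n‖ ≤ (Nat.log 2 N + 1) * B := by
  have hpow (k : ℕ) : ‖∑ n ∈ Ico 1 (2 ^ k), z n‖ ≤ k * B := by
    induction k with
    | zero => simp
    | succ k ih =>
      rw [← sum_Ico_consecutive z (Nat.one_le_two_pow (n := k)) (Nat.pow_le_pow_right two_pos
        k.le_succ), pow_succ']
      refine (norm_add_le _ _).trans ?_
      have := hB (2 ^ k) (by positivity)
      push_cast
      linarith
  have hsubset : Ioc 0 N ⊆ Ico 1 (2 ^ (Nat.log 2 N + 1)) := fun n hn ↦ by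
    have := Nat.lt_pow_succ_log_self one_lt_two N
    rw [mem_Ioc] at hn
    rw [mem_Ico]
    omega
  rw [sum_subset hsubset fun n hn hnN ↦ hz n ?_]
  · exact_mod_cast hpow (Nat.log 2 N + 1)
  · rw [mem_Ioc] at hnN
    rw [mem_Ico] at hn
    omega

namespace IsDirichletApprox

variable {α : ℝ} {a : ℤ} {q : ℕ}

lemma sum_product_cappedInv_le (h : IsDirichletApprox α a q) {M : ℝ} (hM : 0 ≤ M) (K : ℕ) :
    ∑ k ∈ Ioc 0 K ×ˢ Ioc 0 K, cappedInv M (distInt ((k.1 - k.2) * α)) ≤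
      K * ((K / q + 1) * (12 * (M + q * (1 + log q)))) := by
  rw [sum_product]
  have hrow (k₁ : ℕ) : ∑ k₂ ∈ Ioc 0 K, cappedInv M (distInt ((k₁ - k₂) * α)) ≤
      (K / q + 1) * (12 * (M + q * (1 + log q))) := by
    have hIoc : Ioc 0 K = Ico 1 (K + 1) := rfl
    rw [hIoc, sum_Ico_eq_sum_range, Nat.add_sub_cancel]
    refine le_of_eq_of_le (sum_congr rfl fun j _ ↦ ?_) (h.sum_range_cappedInv_le (1 - k₁) hM K)
    rw [← distInt_neg]
    push_cast
    ring_nf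
  refine (sum_le_sum fun k₁ _ ↦ hrow k₁).trans_eq ?_
  rw [sum_const, Nat.card_Ioc, nsmul_eq_mul, Nat.sub_zero]

lemma norm_sq_sum_Ico_mul_expSum_le (h : IsDirichletApprox α a q) {f g : ArithmeticFunction ℝ}
    (hf : ∀ d, |f d| ≤ 1) {N D : ℕ} (hD : 0 < D) {W : ℝ} (hg : ∀ k ≤ N, |g k| ≤ W) :
    ‖∑ d ∈ Ico D (2 * D), (f d : ℂ) * expSum g (N / d) (d * α)‖ ^ 2 ≤
      12 * W ^ 2 * (1 + log q) * (N * (N / q + N / D + D + q)) := by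
  have hq : (0 : ℝ) < q := mod_cast h.pos
  have hlog := log_natCast_nonneg q
  set K : ℝ := ((N / D : ℕ) : ℝ)
  have hK : K ≤ N / D := Nat.cast_div_le
  have hKD : D * K ≤ N := by
    rwa [le_div_iff₀' (mod_cast hD)] at hK
  calc ‖∑ d ∈ Ico D (2 * D), (f d : ℂ) * expSum g (N / d) (d * α)‖ ^ 2
      ≤ D * ∑ d ∈ Ico D (2 * D), ‖expSum g (N / d) (d * α)‖ ^ 2 := by
        have := norm_sq_sum_mul_le_card_mul_sum (s := Ico D (2 * D)) (fun d _ ↦ hf d)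
          fun d ↦ expSum g (N / d) (d * α)
        rwa [Nat.card_Ico, show 2 * D - D = D by omega] at this
    _ ≤ D * (W ^ 2 * (K * ((K / q + 1) * (12 * (D + q * (1 + log q)))))) := by
        gcongr
        refine (sum_norm_sq_expSum_le g hD hg α).trans ?_
        gcongr
        exact h.sum_product_cappedInv_le D.cast_nonneg _
    _ ≤ D * (W ^ 2 * (K * ((K / q + 1) * (12 * (D * (1 + log q) + q * (1 + log q)))))) := by
        gcongr
        exact le_mul_of_one_le_right D.cast_nonneg (by linarith)
    _ = 12 * W ^ 2 * (1 + log q) * (D * K * (D * K / q + K + D + q)) := by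
        field_simp
        ring
    _ ≤ 12 * W ^ 2 * (1 + log q) * (N * (N / q + N / D + D + q)) := by gcongr

lemma norm_sq_sum_Ico_mul_expSum_le_of_support (h : IsDirichletApprox α a q)
    {f g : ArithmeticFunction ℝ} {A B N D : ℕ} (hA : 0 < A) (hB : 0 < B) (hD : 0 < D) {W : ℝ}
    (hf : ∀ d, |f d| ≤ 1) (hfA : ∀ d < A, f d = 0)
    (hg : ∀ k ≤ N, |g k| ≤ W) (hgB : ∀ k < B, g k = 0) :
    ‖∑ d ∈ Ico D (2 * D), (f d : ℂ) * expSum g (N / d) (d * α)‖ ^ 2 ≤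
      12 * W ^ 2 * (1 + log q) * (N * (N / q + 2 * N / A + N / B + q)) := by
  rcases le_or_gt (2 * D) A with hDA | hAD
  · rw [sum_eq_zero fun d hd ↦ by rw [hfA d ((mem_Ico.1 hd).2.trans_le hDA)]; simp]
    simpa using by positivity
  rcases lt_or_ge N (B * D) with hND | hDN
  · have hvanish : ∀ d ∈ Ico D (2 * D), expSum g (N / d) (d * α) = 0 := by
      refine fun d hd ↦ sum_eq_zero fun k hk ↦ ?_
      have hDd := (mem_Ico.1 hd).1
      have hkB : k < B := (mem_Ioc.1 hk).2.trans_lt <| (Nat.div_lt_iff_lt_mul (hD.trans_le hDd)).2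
        (hND.trans_le (Nat.mul_le_mul_left B hDd))
      simp [hgB k hkB]
    rw [sum_eq_zero fun d hd ↦ by rw [hvanish d hd, mul_zero]]
    simpa using by positivity
  have hA' : (0 : ℝ) < A := mod_cast hA
  have hD' : (0 : ℝ) < D := mod_cast hD
  have hND : (N / D : ℝ) ≤ 2 * N / A := by
    rw [div_le_div_iff₀ hD' hA']
    have : (A : ℝ) ≤ 2 * D := mod_cast hAD.le
    nlinarith [N.cast_nonneg (α := ℝ)]
  have hDN' : (D : ℝ) ≤ N / B := by
    rw [le_div_iff₀' (mod_cast hB)]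
    exact_mod_cast hDN
  refine (h.norm_sq_sum_Ico_mul_expSum_le hf hD hg).trans ?_
  gcongr

lemma norm_expSum_mul_le_of_support (h : IsDirichletApprox α a q)
    {f g : ArithmeticFunction ℝ} {A B N : ℕ} (hA : 0 < A) (hB : 0 < B) {W : ℝ}
    (hf : ∀ d, |f d| ≤ 1) (hfA : ∀ d < A, f d = 0)
    (hg : ∀ k ≤ N, |g k| ≤ W) (hgB : ∀ k < B, g k = 0) :
    ‖expSum (f * g) N α‖ ≤ (Nat.log 2 N + 1) *
      √(12 * W ^ 2 * (1 + log q) * (N * (N / q + 2 * N / A + N / B + q))) := by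
  rw [expSum_mul]
  refine norm_sum_Ioc_le_of_dyadic (fun d hd ↦ ?_) fun D hD ↦ ?_
  · simp [Nat.div_eq_of_lt hd, expSum]
  · exact le_sqrt_of_sq_le
      (h.norm_sq_sum_Ico_mul_expSum_le_of_support hA hB hD hf hfA hg hgB)

end IsDirichletApprox

/-! ### Vaughan's identity -/

/-- The arithmetic function that agrees with `f` on `s` and vanishes outside `s`. -/
noncomputable def restrictTo {R : Type*} [Zero R] (f : ArithmeticFunction R) (s : Set ℕ) :
    ArithmeticFunction R :=
  ⟨s.indicator f, by simp⟩

lemma restrictTo_of_mem {R : Type*} [Zero R] (f : ArithmeticFunction R) {s : Set ℕ} {n : ℕ}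
    (hn : n ∈ s) : restrictTo f s n = f n :=
  Set.indicator_of_mem hn f

lemma restrictTo_of_notMem {R : Type*} [Zero R] (f : ArithmeticFunction R) {s : Set ℕ} {n : ℕ}
    (hn : n ∉ s) : restrictTo f s n = 0 :=
  Set.indicator_of_notMem hn f

lemma restrictTo_Iic_of_lt {R : Type*} [Zero R] (f : ArithmeticFunction R) {U n : ℕ}
    (hn : U < n) : restrictTo f (Set.Iic U) n = 0 :=
  restrictTo_of_notMem f (Set.notMem_Iic.2 hn)

lemma restrictTo_compl_Iic_of_lt {R : Type*} [Zero R] (f : ArithmeticFunction R) {U n : ℕ}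
    (hn : n < U + 1) : restrictTo f (Set.Iic U)ᶜ n = 0 :=
  restrictTo_of_notMem f (Set.notMem_compl_iff.2 (Nat.lt_succ_iff.1 hn))

lemma restrictTo_add_restrictTo_compl {R : Type*} [AddMonoid R] (f : ArithmeticFunction R)
    (s : Set ℕ) : restrictTo f s + restrictTo f sᶜ = f := by
  ext n
  exact Set.indicator_self_add_compl_apply s f n

lemma abs_restrictTo_le (f : ArithmeticFunction ℝ) (s : Set ℕ) (n : ℕ) :
    |restrictTo f s n| ≤ |f n| := by
  by_cases hn : n ∈ s
  · rw [restrictTo_of_mem f hn]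
  · rw [restrictTo_of_notMem f hn, abs_zero]
    exact abs_nonneg _

theorem vaughan_identity (s t : Set ℕ) :
    Λ = restrictTo Λ t + restrictTo (μ : ArithmeticFunction ℝ) s * ArithmeticFunction.log
      - restrictTo (μ : ArithmeticFunction ℝ) s * restrictTo Λ t * (ζ : ArithmeticFunction ℝ)
      + restrictTo (μ : ArithmeticFunction ℝ) sᶜ *
        (restrictTo Λ tᶜ * (ζ : ArithmeticFunction ℝ)) := by
  have hΛ := restrictTo_add_restrictTo_compl Λ t
  have hμ := restrictTo_add_restrictTo_compl (μ : ArithmeticFunction ℝ) s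
  have hinv : (μ : ArithmeticFunction ℝ) * (ζ : ArithmeticFunction ℝ) = 1 :=
    ArithmeticFunction.coe_moebius_mul_coe_zeta
  rw [← hμ] at hinv
  rw [← ArithmeticFunction.vonMangoldt_mul_zeta]
  linear_combination (-restrictTo Λ tᶜ) * hinv +
    (restrictTo (μ : ArithmeticFunction ℝ) s * (ζ : ArithmeticFunction ℝ) - 1) * hΛ

lemma mul_apply_eq_zero_of_mul_lt {R : Type*} [Semiring R] {f g : ArithmeticFunction R}
    {A B : ℕ} (hf : ∀ n, A < n → f n = 0) (hg : ∀ n, B < n → g n = 0) {n : ℕ} (hn : A * B < n) :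
    (f * g) n = 0 := by
  rw [ArithmeticFunction.mul_apply]
  refine sum_eq_zero fun x hx ↦ ?_
  have hx := (Nat.mem_divisorsAntidiagonal.1 hx).1
  rcases le_or_gt x.1 A with hA | hA
  · rw [hg x.2, mul_zero]
    by_contra! hB
    exact hn.not_ge (hx ▸ Nat.mul_le_mul hA hB)
  · rw [hf x.1 hA, zero_mul]

lemma mul_apply_eq_zero_of_lt {R : Type*} [Semiring R] {f : ArithmeticFunction R} {A : ℕ}
    (hf : ∀ n < A, f n = 0) (g : ArithmeticFunction R) {n : ℕ} (hn : n < A) : (f * g) n = 0 := by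
  rw [ArithmeticFunction.mul_apply]
  refine sum_eq_zero fun x hx ↦ ?_
  have hxn := Nat.divisor_le (Nat.fst_mem_divisors_of_mem_antidiagonal hx)
  rw [hf x.1 (hxn.trans_lt hn), zero_mul]

lemma abs_mul_apply_le_log {f g : ArithmeticFunction ℝ} (hf : ∀ n, |f n| ≤ 1)
    (hg : ∀ n, |g n| ≤ Λ n) (n : ℕ) : |(f * g) n| ≤ log n := by
  calc |(f * g) n| ≤ ∑ x ∈ n.divisorsAntidiagonal, |f x.1 * g x.2| := by
        rw [ArithmeticFunction.mul_apply]
        exact abs_sum_le_sum_abs _ _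
    _ ≤ ∑ x ∈ n.divisorsAntidiagonal, Λ x.2 := by
        refine sum_le_sum fun x _ ↦ ?_
        rw [abs_mul]
        exact (mul_le_of_le_one_left (abs_nonneg _) (hf x.1)).trans (hg x.2)
    _ = log n := by
        rw [Nat.sum_divisorsAntidiagonal' fun _ k ↦ Λ k, ArithmeticFunction.vonMangoldt_sum]

lemma abs_restrictTo_vonMangoldt_le (s : Set ℕ) (n : ℕ) : |restrictTo Λ s n| ≤ Λ n :=
  (abs_restrictTo_le Λ s n).trans_eq (abs_of_nonneg ArithmeticFunction.vonMangoldt_nonneg)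

lemma abs_restrictTo_moebius_le_one (s : Set ℕ) (n : ℕ) :
    |restrictTo (μ : ArithmeticFunction ℝ) s n| ≤ 1 := by
  refine (abs_restrictTo_le _ s n).trans ?_
  rw [ArithmeticFunction.intCoe_apply]
  exact_mod_cast ArithmeticFunction.abs_moebius_le_one

/-! ### Sums over prime powers and over primes -/

/-- The quantity `x/√q + √(xq) + x^{4/5}` bounding exponential sums over primes up to `x`. -/
noncomputable def vaughanMajorant (q : ℕ) (x : ℝ) : ℝ := x / √q + √(x * q) + x ^ ((4 : ℝ) / 5)

lemma vaughanMajorant_nonneg (q : ℕ) {x : ℝ} (hx : 0 ≤ x) : 0 ≤ vaughanMajorant q x := by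
  unfold vaughanMajorant
  positivity

lemma vaughanMajorant_le_vaughanMajorant (q : ℕ) {x y : ℝ} (hx : 0 ≤ x) (hxy : x ≤ y) :
    vaughanMajorant q x ≤ vaughanMajorant q y := by
  unfold vaughanMajorant
  gcongr

lemma sqrt_mul_le_vaughanMajorant (q : ℕ) {x : ℝ} (hx : 0 ≤ x) :
    √(x * q) ≤ vaughanMajorant q x := by
  have : 0 ≤ x / √q := by positivity
  have : 0 ≤ x ^ ((4 : ℝ) / 5) := by positivity
  unfold vaughanMajorant
  linarith

lemma rpow_le_vaughanMajorant (q : ℕ) {x : ℝ} (hx : 0 ≤ x) :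
    x ^ ((4 : ℝ) / 5) ≤ vaughanMajorant q x := by
  have : 0 ≤ x / √q := by positivity
  unfold vaughanMajorant
  linarith [sqrt_nonneg (x * q)]

lemma div_add_rpow_add_le_vaughanMajorant {q : ℕ} (hq : 0 < q) {x : ℝ} (hqx : q ≤ x) :
    x / q + x ^ ((4 : ℝ) / 5) + q ≤ vaughanMajorant q x := by
  have hq' : (1 : ℝ) ≤ q := mod_cast hq
  have hdiv : x / q ≤ x / √q := by
    gcongr
    · linarith
    · exact sqrt_le_iff.2 ⟨by positivity, by nlinarith⟩
  have hsqrt : (q : ℝ) ≤ √(x * q) := le_sqrt_of_sq_le (by nlinarith)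
  unfold vaughanMajorant
  linarith

lemma sq_div_add_rpow_sq_add_le_sq_vaughanMajorant (q : ℕ) {x : ℝ} (hx : 0 ≤ x) :
    x ^ 2 / q + (x ^ ((4 : ℝ) / 5)) ^ 2 + x * q ≤ vaughanMajorant q x ^ 2 := by
  have hdiv : (x / √q) ^ 2 = x ^ 2 / q := by rw [div_pow, sq_sqrt q.cast_nonneg]
  have hsqrt : √(x * q) ^ 2 = x * q := sq_sqrt (by positivity)
  have : 0 ≤ x / √q * √(x * q) := by positivity
  have : 0 ≤ x / √q * x ^ ((4 : ℝ) / 5) := by positivity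
  have : 0 ≤ √(x * q) * x ^ ((4 : ℝ) / 5) := by positivity
  rw [vaughanMajorant]
  nlinarith

lemma natLog_two_add_one_le (N : ℕ) : (Nat.log 2 N + 1 : ℝ) ≤ 2 * (1 + log N) := by
  have hlog : (Nat.log 2 N : ℝ) ≤ log N / log 2 := natLog_le_logb N 2
  rw [le_div_iff₀ (log_pos one_lt_two)] at hlog
  nlinarith [log_two_gt_d9]

lemma norm_expSum_le_of_abs_le_vonMangoldt {f : ArithmeticFunction ℝ} (hf : ∀ n, |f n| ≤ Λ n)
    {U N : ℕ} (hfU : ∀ n ≤ N, U < n → f n = 0) (α : ℝ) : ‖expSum f N α‖ ≤ 6 * U := by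
  have hlog : log 4 ≤ 2 := by
    rw [show (4 : ℝ) = 2 ^ 2 by norm_num, log_pow]
    push_cast
    linarith [log_two_lt_d9]
  calc ‖expSum f N α‖ ≤ ∑ n ∈ Ioc 0 N, |f n| := norm_expSum_le_sum_abs f N α
    _ = ∑ n ∈ Ioc 0 N with n ≤ U, |f n| :=
        (sum_filter_of_ne fun n hn hne ↦ not_lt.1 fun hlt ↦
          hne (by rw [hfU n (mem_Ioc.1 hn).2 hlt, abs_zero])).symm
    _ ≤ ∑ n ∈ Ioc 0 U, |f n| := by
        refine sum_le_sum_of_subset_of_nonneg (fun n ↦ ?_) fun n _ _ ↦ abs_nonneg _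
        simp only [mem_filter, mem_Ioc]
        tauto
    _ ≤ ∑ n ∈ Ioc 0 U, Λ n := sum_le_sum fun n _ ↦ hf n
    _ = Chebyshev.psi U := by rw [Chebyshev.psi, Nat.floor_natCast]
    _ ≤ (log 4 + 4) * U := Chebyshev.psi_le_const_mul_self U.cast_nonneg
    _ ≤ 6 * U := by
        gcongr
        linarith

lemma norm_expSum_restrictTo_compl_prime_le (N : ℕ) (α : ℝ) :
    ‖expSum (restrictTo Λ {p | p.Prime}ᶜ) N α‖ ≤ 2 * √N * log N := by
  rcases N.eq_zero_or_pos with rfl | hN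
  · simp [expSum]
  calc ‖expSum (restrictTo Λ {p | p.Prime}ᶜ) N α‖
      ≤ ∑ n ∈ Ioc 0 N, |restrictTo Λ {p | p.Prime}ᶜ n| := norm_expSum_le_sum_abs _ N α
    _ = ∑ n ∈ Ioc 0 N with ¬n.Prime, Λ n := by
        rw [sum_filter]
        refine sum_congr rfl fun n _ ↦ ?_
        split_ifs with hn
        · rw [restrictTo_of_notMem Λ (by simpa using hn), abs_zero]
        · rw [restrictTo_of_mem Λ hn, abs_of_nonneg ArithmeticFunction.vonMangoldt_nonneg]
    _ = Chebyshev.psi N - Chebyshev.theta N := by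
        rw [Chebyshev.psi_sub_theta_eq_sum_not_prime, Nat.floor_natCast]
    _ ≤ 2 * √N * log N := Chebyshev.psi_sub_theta_le (mod_cast hN)

lemma expSum_sub_expSum (f : ArithmeticFunction ℝ) {M N : ℕ} (hMN : M ≤ N) (α : ℝ) :
    expSum f N α - expSum f M α = ∑ n ∈ Ioc M N, (f n : ℂ) * e (n * α) := by
  rw [expSum, expSum, ← sum_Ioc_consecutive _ M.zero_le hMN, add_sub_cancel_left]

lemma exists_S1_eq_expSum_sub_expSum (δ X α : ℝ) : ∃ M ≤ ⌊X⌋₊,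
    S1 δ X α = expSum (restrictTo Λ {p | p.Prime}) ⌊X⌋₊ α -
      expSum (restrictTo Λ {p | p.Prime}) M α := by
  refine ⟨min ⌊X⌋₊ (⌈δ * X⌉₊ - 1), min_le_left _ _, ?_⟩
  rw [expSum_sub_expSum _ (min_le_left _ _), S1]
  have hfilter : ((Icc 1 ⌊X⌋₊).filter fun p : ℕ ↦ p.Prime ∧ δ * X ≤ p ∧ (p : ℝ) ≤ X) =
      (Ioc (min ⌊X⌋₊ (⌈δ * X⌉₊ - 1)) ⌊X⌋₊).filter Nat.Prime := by
    ext p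
    simp only [mem_filter, mem_Icc, mem_Ioc, ← Nat.ceil_le]
    have hfloor (hp : p ≠ 0) : (p : ℝ) ≤ X ↔ p ≤ ⌊X⌋₊ := (Nat.le_floor_iff' hp).symm
    constructor
    · rintro ⟨⟨hp₁, hpX⟩, hp, hδ, -⟩
      exact ⟨⟨by omega, hpX⟩, hp⟩
    · rintro ⟨⟨hδ, hpX⟩, hp⟩
      have := hp.pos
      exact ⟨⟨hp.pos, hpX⟩, hp, by omega, (hfloor hp.ne_zero).2 hpX⟩
  rw [hfilter, sum_filter]
  refine sum_congr rfl fun p _ ↦ ?_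
  split_ifs with hp
  · rw [restrictTo_of_mem Λ (Set.mem_ofPred.2 hp), ArithmeticFunction.vonMangoldt_apply_prime hp]
  · rw [restrictTo_of_notMem Λ (Set.mem_ofPred.not.2 hp), Complex.ofReal_zero, zero_mul]

namespace IsDirichletApprox

variable {α : ℝ} {a : ℤ} {q : ℕ}

lemma norm_expSum_mul_le_vaughanMajorant_of_monotone (h : IsDirichletApprox α a q)
    {f w : ArithmeticFunction ℝ} {D N : ℕ} {c : ℝ} (hc : 0 ≤ c) (hf : ∀ d, |f d| ≤ c)
    (hfD : ∀ d, D < d → f d = 0) (hw : Monotone ⇑w) (hqN : q ≤ N)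
    (hD : (D : ℝ) ≤ (N : ℝ) ^ ((4 : ℝ) / 5)) :
    ‖expSum (f * w) N α‖ ≤ c * w N * (168 * vaughanMajorant q N * (1 + log N)) := by
  have hN : (1 : ℝ) ≤ N := mod_cast h.pos.trans_le hqN
  have hDN : D ≤ N := by
    have : (N : ℝ) ^ ((4 : ℝ) / 5) ≤ N := rpow_le_self_of_one_le hN (by norm_num)
    exact_mod_cast hD.trans this
  have hlog : log (q * D) ≤ 2 * log N := by
    rw [two_mul, ← log_mul (by positivity) (by positivity)]
    exact_mod_cast log_natCast_le_log_natCast (Nat.mul_le_mul hqN hDN)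
  have hmaj : (N / q + D + q : ℝ) ≤ vaughanMajorant q N := by
    have := div_add_rpow_add_le_vaughanMajorant h.pos (x := N) (mod_cast hqN)
    linarith
  have hwN : 0 ≤ w N := w.map_zero.symm.trans_le (hw N.zero_le)
  refine (h.norm_expSum_mul_le_of_monotone hc hf hfD hw N).trans ?_
  calc c * w N * (84 * (N / q + D + q) * (1 + log (q * D)))
      ≤ c * w N * (84 * vaughanMajorant q N * (2 * (1 + log N))) := by
        have := vaughanMajorant_nonneg q N.cast_nonneg (x := (N : ℝ))
        gcongr
        · have : 0 ≤ log (q * D) := mod_cast log_natCast_nonneg (q * D)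
          positivity
        · linarith
    _ = c * w N * (168 * vaughanMajorant q N * (1 + log N)) := by ring

lemma norm_expSum_mul_le_vaughanMajorant_of_support (h : IsDirichletApprox α a q)
    {f g : ArithmeticFunction ℝ} {A N : ℕ} (hqN : q ≤ N)
    (hA : (N : ℝ) ^ ((2 : ℝ) / 5) ≤ A) (hf : ∀ d, |f d| ≤ 1) (hfA : ∀ d < A, f d = 0)
    (hg : ∀ k ≤ N, |g k| ≤ log N) (hgA : ∀ k < A, g k = 0) :
    ‖expSum (f * g) N α‖ ≤ 12 * vaughanMajorant q N * (1 + log N) ^ 3 := by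
  have hN : (1 : ℝ) ≤ N := mod_cast h.pos.trans_le hqN
  have hA_pos : (0 : ℝ) < A := lt_of_lt_of_le (by positivity) hA
  have hmaj := vaughanMajorant_nonneg q N.cast_nonneg (x := (N : ℝ))
  have hlogq : log q ≤ log N := log_natCast_le_log_natCast hqN
  have hlogN := log_natCast_nonneg N
  have hquot : (N / A * N : ℝ) ≤ ((N : ℝ) ^ ((4 : ℝ) / 5)) ^ 2 := by
    have hpow : ((N : ℝ) ^ ((4 : ℝ) / 5)) ^ 2 * (N : ℝ) ^ ((2 : ℝ) / 5) = N ^ 2 := by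
      rw [← rpow_mul_natCast N.cast_nonneg, ← rpow_add (by positivity), ← rpow_natCast]
      norm_num
    rw [div_mul_eq_mul_div, div_le_iff₀ hA_pos, ← sq, ← hpow]
    gcongr
  have hradicand : 12 * log N ^ 2 * (1 + log q) * (N * (N / q + 2 * N / A + N / A + q)) ≤
      (6 * vaughanMajorant q N * (1 + log N) ^ 2) ^ 2 := by
    have hsq := sq_div_add_rpow_sq_add_le_sq_vaughanMajorant q N.cast_nonneg (x := (N : ℝ))
    calc 12 * log N ^ 2 * (1 + log q) * (N * (N / q + 2 * N / A + N / A + q))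
        = 12 * (log N ^ 2 * (1 + log q)) * (N ^ 2 / q + 3 * (N / A * N) + N * q) := by ring
      _ ≤ 12 * ((1 + log N) ^ 2 * (1 + log N) ^ 2) * (3 * vaughanMajorant q N ^ 2) := by
          have : 0 ≤ (N : ℝ) ^ 2 / q := by positivity
          have : 0 ≤ (N : ℝ) * q := by positivity
          gcongr
          · linarith
          · nlinarith
          · linarith
      _ = (6 * vaughanMajorant q N * (1 + log N) ^ 2) ^ 2 := by ring
  have hA_pos' : 0 < A := mod_cast hA_pos
  calc ‖expSum (f * g) N α‖
      ≤ (Nat.log 2 N + 1) *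
        √(12 * log N ^ 2 * (1 + log q) * (N * (N / q + 2 * N / A + N / A + q))) :=
        h.norm_expSum_mul_le_of_support hA_pos' hA_pos' hf hfA hg hgA
    _ ≤ 2 * (1 + log N) * (6 * vaughanMajorant q N * (1 + log N) ^ 2) := by
        gcongr
        · exact natLog_two_add_one_le N
        · exact sqrt_le_iff.2 ⟨by positivity, hradicand⟩
    _ = 12 * vaughanMajorant q N * (1 + log N) ^ 3 := by ring

lemma norm_expSum_moebius_mul_log_le (h : IsDirichletApprox α a q) {U N : ℕ} (hqN : q ≤ N)
    (hU : (U : ℝ) ≤ (N : ℝ) ^ ((4 : ℝ) / 5)) :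
    ‖expSum (restrictTo (μ : ArithmeticFunction ℝ) (Set.Iic U) * ArithmeticFunction.log) N α‖ ≤
      log N * (168 * vaughanMajorant q N * (1 + log N)) := by
  have hmono : Monotone ⇑ArithmeticFunction.log := fun m n hmn ↦ log_natCast_le_log_natCast hmn
  simpa using h.norm_expSum_mul_le_vaughanMajorant_of_monotone zero_le_one
    (abs_restrictTo_moebius_le_one _) (fun _ ↦ restrictTo_Iic_of_lt _) hmono hqN hU

lemma norm_expSum_moebius_mul_vonMangoldt_mul_zeta_le (h : IsDirichletApprox α a q) {U N : ℕ}
    (hqN : q ≤ N) (hU : ((U * U : ℕ) : ℝ) ≤ (N : ℝ) ^ ((4 : ℝ) / 5)) :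
    ‖expSum (restrictTo (μ : ArithmeticFunction ℝ) (Set.Iic U) * restrictTo Λ (Set.Iic U) *
      (ζ : ArithmeticFunction ℝ)) N α‖ ≤ log N * (168 * vaughanMajorant q N * (1 + log N)) := by
  have hN : 0 < N := h.pos.trans_le hqN
  have hUN : U * U ≤ N := by
    have : (N : ℝ) ^ ((4 : ℝ) / 5) ≤ N := rpow_le_self_of_one_le (mod_cast hN) (by norm_num)
    exact_mod_cast hU.trans this
  set f := restrictTo (μ : ArithmeticFunction ℝ) (Set.Iic U) * restrictTo Λ (Set.Iic U)
  have hfU (d : ℕ) (hd : U * U < d) : f d = 0 :=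
    mul_apply_eq_zero_of_mul_lt (fun _ ↦ restrictTo_Iic_of_lt _) (fun _ ↦ restrictTo_Iic_of_lt _) hd
  have hf (d : ℕ) : |f d| ≤ log N := by
    rcases le_or_gt d (U * U) with hd | hd
    · exact (abs_mul_apply_le_log (abs_restrictTo_moebius_le_one _)
        (abs_restrictTo_vonMangoldt_le _) d).trans (log_natCast_le_log_natCast (hd.trans hUN))
    · rw [hfU d hd, abs_zero]
      exact log_natCast_nonneg N
  have hmono : Monotone ⇑(ζ : ArithmeticFunction ℝ) := by
    intro m n hmn
    rcases m.eq_zero_or_pos with rfl | hm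
    · by_cases hn : n = 0 <;> simp [hn]
    · simp [hm.ne', (hm.trans_le hmn).ne']
  simpa [hN.ne'] using
    h.norm_expSum_mul_le_vaughanMajorant_of_monotone (log_natCast_nonneg N) hf hfU hmono hqN hU

lemma norm_expSum_moebius_compl_mul_le (h : IsDirichletApprox α a q) {U N : ℕ}
    (hqN : q ≤ N) (hU : (N : ℝ) ^ ((2 : ℝ) / 5) ≤ (U + 1 : ℕ)) :
    ‖expSum (restrictTo (μ : ArithmeticFunction ℝ) (Set.Iic U)ᶜ *
      (restrictTo Λ (Set.Iic U)ᶜ * (ζ : ArithmeticFunction ℝ))) N α‖ ≤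
      12 * vaughanMajorant q N * (1 + log N) ^ 3 := by
  have hzeta (n : ℕ) : |(ζ : ArithmeticFunction ℝ) n| ≤ 1 := by
    by_cases hn : n = 0 <;> simp [hn]
  refine h.norm_expSum_mul_le_vaughanMajorant_of_support hqN hU (abs_restrictTo_moebius_le_one _)
    (fun _ ↦ restrictTo_compl_Iic_of_lt _) (fun k hk ↦ ?_)
    fun k ↦ mul_apply_eq_zero_of_lt (fun _ ↦ restrictTo_compl_Iic_of_lt _) _
  rw [mul_comm]
  exact (abs_mul_apply_le_log hzeta (abs_restrictTo_vonMangoldt_le _) k).trans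
    (log_natCast_le_log_natCast hk)

lemma norm_expSum_vonMangoldt_le_of_le (h : IsDirichletApprox α a q) {N : ℕ} (hqN : q ≤ N) :
    ‖expSum Λ N α‖ ≤ 354 * vaughanMajorant q N * (1 + log N) ^ 3 := by
  have hN : (1 : ℝ) ≤ N := mod_cast h.pos.trans_le hqN
  have hlogN := log_natCast_nonneg N
  have hmaj := vaughanMajorant_nonneg q N.cast_nonneg (x := (N : ℝ))
  set U := ⌊(N : ℝ) ^ ((2 : ℝ) / 5)⌋₊
  have hU : (U : ℝ) ≤ (N : ℝ) ^ ((2 : ℝ) / 5) := Nat.floor_le (by positivity)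
  have hU₁ : (N : ℝ) ^ ((2 : ℝ) / 5) ≤ (U + 1 : ℕ) := mod_cast (Nat.lt_floor_add_one _).le
  have hU_le : (U : ℝ) ≤ (N : ℝ) ^ ((4 : ℝ) / 5) :=
    hU.trans (rpow_le_rpow_of_exponent_le hN (by norm_num))
  have hUU : ((U * U : ℕ) : ℝ) ≤ (N : ℝ) ^ ((4 : ℝ) / 5) := by
    calc ((U * U : ℕ) : ℝ) = (U : ℝ) * U := by push_cast; rfl
      _ ≤ (N : ℝ) ^ ((2 : ℝ) / 5) * (N : ℝ) ^ ((2 : ℝ) / 5) := by gcongr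
      _ = (N : ℝ) ^ ((4 : ℝ) / 5) := by
        rw [← rpow_add (by positivity)]
        norm_num
  have hinit : ‖expSum (restrictTo Λ (Set.Iic U)) N α‖ ≤ 6 * vaughanMajorant q N := by
    have := norm_expSum_le_of_abs_le_vonMangoldt (abs_restrictTo_vonMangoldt_le (Set.Iic U))
      (fun n (_ : n ≤ N) ↦ restrictTo_Iic_of_lt Λ) α
    linarith [rpow_le_vaughanMajorant q N.cast_nonneg (x := (N : ℝ))]
  have hlog := h.norm_expSum_moebius_mul_log_le hqN hU_le
  have hzeta := h.norm_expSum_moebius_mul_vonMangoldt_mul_zeta_le hqN hUU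
  have hbilin := h.norm_expSum_moebius_compl_mul_le hqN hU₁
  rw [vaughan_identity (Set.Iic U) (Set.Iic U), expSum_add, expSum_sub, expSum_add]
  refine (norm_add_le_of_le (norm_sub_le_of_le (norm_add_le_of_le hinit hlog) hzeta)
    hbilin).trans ?_
  have hpoly : 6 + 336 * log N * (1 + log N) + 12 * (1 + log N) ^ 3 ≤
      354 * (1 + log N) ^ 3 := by
    nlinarith [pow_nonneg hlogN 2, pow_nonneg hlogN 3]
  nlinarith [mul_le_mul_of_nonneg_left hpoly hmaj]

lemma norm_expSum_vonMangoldt_le (h : IsDirichletApprox α a q) (N : ℕ) :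
    ‖expSum Λ N α‖ ≤ 354 * vaughanMajorant q N * (1 + log N) ^ 3 := by
  rcases le_or_gt q N with hqN | hNq
  · exact h.norm_expSum_vonMangoldt_le_of_le hqN
  have hmaj : (N : ℝ) ≤ vaughanMajorant q N := by
    refine le_trans ?_ (sqrt_mul_le_vaughanMajorant q N.cast_nonneg)
    refine le_sqrt_of_sq_le ?_
    rw [sq]
    gcongr
  have htrivial := norm_expSum_le_of_abs_le_vonMangoldt (N := N)
    (fun n ↦ (abs_of_nonneg ArithmeticFunction.vonMangoldt_nonneg).le)
    (fun n hnN hNn ↦ absurd hnN hNn.not_ge) α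
  have hlog : 1 ≤ (1 + log N) ^ 3 := one_le_pow₀ (by linarith [log_natCast_nonneg N])
  nlinarith [N.cast_nonneg (α := ℝ)]

lemma norm_expSum_prime_le (h : IsDirichletApprox α a q) (N : ℕ) :
    ‖expSum (restrictTo Λ {p | p.Prime}) N α‖ ≤
      356 * vaughanMajorant q N * (1 + log N) ^ 3 := by
  have hΛ := h.norm_expSum_vonMangoldt_le N
  have hpow := norm_expSum_restrictTo_compl_prime_le N α
  have hlogN := log_natCast_nonneg N
  have hmaj := vaughanMajorant_nonneg q N.cast_nonneg (x := (N : ℝ))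
  have hsqrt : √N ≤ vaughanMajorant q N := by
    refine le_trans ?_ (sqrt_mul_le_vaughanMajorant q N.cast_nonneg)
    gcongr
    exact le_mul_of_one_le_right N.cast_nonneg (mod_cast h.pos)
  have hlog : log N ≤ (1 + log N) ^ 3 := by
    nlinarith [pow_nonneg hlogN 2, pow_nonneg hlogN 3]
  have hsplit := expSum_add (restrictTo Λ {p | p.Prime}) (restrictTo Λ {p | p.Prime}ᶜ) N α
  rw [restrictTo_add_restrictTo_compl] at hsplit
  rw [eq_sub_of_add_eq hsplit.symm]
  calc ‖expSum Λ N α - expSum (restrictTo Λ {p | p.Prime}ᶜ) N α‖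
      ≤ 354 * vaughanMajorant q N * (1 + log N) ^ 3 + 2 * √N * log N :=
        norm_sub_le_of_le hΛ hpow
    _ ≤ 354 * vaughanMajorant q N * (1 + log N) ^ 3 +
          2 * vaughanMajorant q N * (1 + log N) ^ 3 := by gcongr
    _ = 356 * vaughanMajorant q N * (1 + log N) ^ 3 := by ring

lemma norm_S1_le (h : IsDirichletApprox α a q) (δ : ℝ) {X : ℝ} (hX : 1 ≤ X) :
    ‖S1 δ X α‖ ≤ 712 * vaughanMajorant q X * (1 + log X) ^ 3 := by
  have hX₀ : 0 ≤ X := zero_le_one.trans hX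
  have hinitial {N : ℕ} (hN : N ≤ ⌊X⌋₊) : ‖expSum (restrictTo Λ {p | p.Prime}) N α‖ ≤
      356 * vaughanMajorant q X * (1 + log X) ^ 3 := by
    have hNX : (N : ℝ) ≤ X := (Nat.le_floor_iff hX₀).1 hN
    have hlog : log N ≤ log X := by
      rw [← log_of_nat_eq_posLog, ← posLog_eq_log (by rwa [abs_of_nonneg hX₀])]
      exact posLog_le_posLog N.cast_nonneg hNX
    have hmaj := vaughanMajorant_le_vaughanMajorant q N.cast_nonneg hNX
    have hmaj₀ := vaughanMajorant_nonneg q hX₀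
    refine (h.norm_expSum_prime_le N).trans ?_
    gcongr
  obtain ⟨M, hM, hS⟩ := exists_S1_eq_expSum_sub_expSum δ X α
  rw [hS]
  refine (norm_sub_le_of_le (hinitial le_rfl) (hinitial hM)).trans_eq ?_
  ring

end IsDirichletApprox

theorem vaughan_bound_general : ∃ C > 0, ∀ (δ : ℝ), ∀ X ≥ (2 : ℝ), ∀ (α : ℝ) (a : ℤ) (q : ℕ),
    IsDirichletApprox α a q →
      ‖S1 δ X α‖ ≤ C * (X / √q + √(X * q) + X ^ ((4 : ℝ) / 5)) * log X ^ 3 := by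
  refine ⟨712 * 3 ^ 3, by norm_num, fun δ X hX α a q h ↦ ?_⟩
  have hmaj := vaughanMajorant_nonneg q (zero_le_two.trans hX)
  have hlog : 1 + log X ≤ 3 * log X := by
    linarith [log_two_gt_d9, log_le_log two_pos hX]
  have hlog₀ : 0 ≤ log X := log_nonneg (by linarith)
  calc ‖S1 δ X α‖ ≤ 712 * vaughanMajorant q X * (1 + log X) ^ 3 := h.norm_S1_le δ (by linarith)
    _ ≤ 712 * vaughanMajorant q X * (3 * log X) ^ 3 := by gcongr
    _ = 712 * 3 ^ 3 * vaughanMajorant q X * log X ^ 3 := by ring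

theorem vaughan_bound (δ : ℝ) (hδ0 : 0 < δ) (hδ1 : δ < 1) :
    ∃ C > 0, ∀ X ≥ (2 : ℝ), ∀ α : ℝ, ∀ a q : ℕ, 0 < a → 0 < q → Nat.gcd a q = 1 →
      |α - (a : ℝ) / q| < 1 / (q : ℝ) ^ 2 →
      ‖S1 δ X α‖ ≤ C * (X / Real.sqrt q + Real.sqrt (X * q) + X ^ ((4 : ℝ) / 5))
        * Real.log X ^ 4 := by
  obtain ⟨C, hC, hbound⟩ := vaughan_bound_general
  refine ⟨2 * C, by positivity, fun X hX α a q _ hq hgcd hα ↦ ?_⟩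
  have hlog : 1 ≤ 2 * log X := by linarith [log_two_gt_d9, log_le_log two_pos hX]
  have hS := hbound δ X hX α a q ⟨hq, Nat.isCoprime_iff_coprime.2 hgcd, by simpa using hα.le⟩
  calc ‖S1 δ X α‖
      ≤ C * (X / √q + √(X * q) + X ^ ((4 : ℝ) / 5)) * log X ^ 3 := hS
    _ ≤ C * (X / √q + √(X * q) + X ^ ((4 : ℝ) / 5)) * log X ^ 3 * (2 * log X) :=
        le_mul_of_one_le_right ((norm_nonneg _).trans hS) hlog
    _ = 2 * C * (X / √q + √(X * q) + X ^ ((4 : ℝ) / 5)) * log X ^ 4 := by ring
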